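/- Let k be a field of characteristic 2 and let θ : k[z0,...,z6] → k[x0,...,x5] be the k-algebra homomorphism determined by θ(z0) = x0*x1 + x2*x3 + x4*x5 and θ(z_{i+1}) = x_i^2 for i = 0,...,5. Regard k[x0,...,x5] as a module over k[z0,...,z6] via θ. Then every polynomial in k[x0,...,x5] that is a k-linear combination of monomials of even total degree lies in the k[z0,...,z6]-submodule generated by the 16 elements: 1, the 14 quadratic monomials x_i*x_j with 0 ≤ i < j ≤ 5 and (i,j) ≠ (4,5), and the quartic monomial x0*x1*x2*x3. -/

import Mathlib

open MvPolynomial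

/-- The `k`-algebra homomorphism `θ : k[z0,...,z6] → k[x0,...,x5]` with
`θ(z0) = x0*x1 + x2*x3 + x4*x5` and `θ(z_{i+1}) = x_i^2`. -/
noncomputable def theta (k : Type*) [CommRing k] :
    MvPolynomial (Fin 7) k →ₐ[k] MvPolynomial (Fin 6) k :=
  aeval ![X 0 * X 1 + X 2 * X 3 + X 4 * X 5,
    X 0 ^ 2, X 1 ^ 2, X 2 ^ 2, X 3 ^ 2, X 4 ^ 2, X 5 ^ 2]

/-!
Since every `x_i ^ 2` is in the image of `θ`, it suffices to treat squarefree monomials of even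
degree. Modulo terms with a square factor, `q = θ(z0)` times `x_i * x_j` is a sum of squarefree
quartics: a single one when `x_i * x_j` is not a term of `q`, and the two products with the other
terms of `q` otherwise. The first case expresses twelve of the fifteen squarefree quartics through
quadratic monomials; the second leaves one free choice, `x0 * x1 * x2 * x3`, among the remaining
three. Likewise `q * 1` yields `x4 * x5`, and `q * (x0 * x1 * x2 * x3)` yields `x0 * ⋯ * x5`.
-/

section

open Finset

theorem monomial_eq_C_mul_prod_sq_pow_mul_prod_odd {σ R : Type*} [Fintype σ] [CommSemiring R]
    (m : σ →₀ ℕ) (a : R) :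
    monomial m a = C a * (∏ i, (X i ^ 2) ^ (m i / 2)) * ∏ i with Odd (m i), X i := by
  have X_pow_eq (i : σ) : (X i : MvPolynomial σ R) ^ m i =
      (X i ^ 2) ^ (m i / 2) * if Odd (m i) then X i else 1 := by
    rw [← pow_mul]
    obtain h | h := Nat.even_or_odd (m i)
    · rw [if_neg (Nat.not_odd_iff_even.mpr h), mul_one, Nat.two_mul_div_two_of_even h]
    · rw [if_pos h, ← pow_succ, Nat.two_mul_div_two_add_one_of_odd h]
  rw [monomial_eq, Finsupp.prod_fintype _ _ fun _ ↦ pow_zero _, prod_filter, mul_assoc,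
    ← prod_mul_distrib]
  simp only [X_pow_eq]

variable {k : Type*} [CommRing k]

variable (k) in
/-- The quadratic form `q = x0 * x1 + x2 * x3 + x4 * x5`, the image of `z0` under `θ`. -/
noncomputable def hyperbolicForm : MvPolynomial (Fin 6) k :=
  X 0 * X 1 + X 2 * X 3 + X 4 * X 5

/-- The involution of the indices for which the terms of `hyperbolicForm` are the products
`X i * X (partner i)`. -/
def partner : Fin 6 → Fin 6 := ![1, 0, 3, 2, 5, 4]

theorem partner_involutive : Function.Involutive partner := fun i ↦ by
  decide +revert

theorem hyperbolicForm_mul_X_mul_X {i j : Fin 6} (hij : i ≠ j) (hj : j ≠ partner i) :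
    hyperbolicForm k * (X i * X j) = X i ^ 2 * (X (partner i) * X j)
      + X j ^ 2 * (X i * X (partner j)) + ∏ l ∈ {partner i, partner j}ᶜ, X l := by
  rw [← Fintype.prod_ite_mem, Fin.prod_univ_six, hyperbolicForm]
  fin_cases i <;> fin_cases j <;> simp [partner] at hij hj ⊢ <;> ring

theorem theta_X_zero : theta k (X 0) = hyperbolicForm k := by
  simp [theta, hyperbolicForm]

theorem theta_X_succ (i : Fin 6) : theta k (X i.succ) = X i ^ 2 := by
  fin_cases i <;> simp [theta]

/-- The structure of a `k[z0,...,z6]`-module on `k[x0,...,x5]` given by `θ`. -/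
noncomputable local instance : Algebra (MvPolynomial (Fin 7) k) (MvPolynomial (Fin 6) k) :=
  (theta k).toAlgebra

theorem smul_eq_theta_mul (c : MvPolynomial (Fin 7) k) (p : MvPolynomial (Fin 6) k) :
    c • p = theta k c * p :=
  rfl

theorem hyperbolicForm_mul_mem {M : Submodule (MvPolynomial (Fin 7) k) (MvPolynomial (Fin 6) k)}
    {p : MvPolynomial (Fin 6) k} (hp : p ∈ M) : hyperbolicForm k * p ∈ M := by
  simpa only [smul_eq_theta_mul, theta_X_zero] using M.smul_mem (X 0) hp

theorem X_sq_mul_mem {M : Submodule (MvPolynomial (Fin 7) k) (MvPolynomial (Fin 6) k)}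
    (i : Fin 6) {p : MvPolynomial (Fin 6) k} (hp : p ∈ M) : X i ^ 2 * p ∈ M := by
  simpa only [smul_eq_theta_mul, theta_X_succ] using M.smul_mem (X i.succ) hp

theorem monomial_mem_of_prod_odd_mem
    {M : Submodule (MvPolynomial (Fin 7) k) (MvPolynomial (Fin 6) k)} {m : Fin 6 →₀ ℕ}
    (hm : ∏ i with Odd (m i), X i ∈ M) (a : k) : monomial m a ∈ M := by
  have theta_coeff : theta k (C a * ∏ i : Fin 6, X i.succ ^ (m i / 2)) =
      C a * ∏ i, (X i ^ 2) ^ (m i / 2) := by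
    simp only [map_mul, map_prod, map_pow, theta_X_succ _, algHom_C, algebraMap_eq]
  rw [monomial_eq_C_mul_prod_sq_pow_mul_prod_odd, ← theta_coeff, ← smul_eq_theta_mul]
  exact M.smul_mem _ hm

variable (k) in
/-- The `k[z0,...,z6]`-submodule of `k[x0,...,x5]` generated by `1`, the squarefree quadratic
monomials other than `x4 * x5`, and `x0 * x1 * x2 * x3`; it contains the even part. -/
noncomputable def evenSpan : Submodule (MvPolynomial (Fin 7) k) (MvPolynomial (Fin 6) k) :=
  .span _ (insert 1 (insert (X 0 * X 1 * X 2 * X 3)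
    ((fun ij : Fin 6 × Fin 6 ↦ X ij.1 * X ij.2) ''
      ({ij | ij.1 < ij.2 ∧ ¬(ij.1 = 4 ∧ ij.2 = 5)} : Finset (Fin 6 × Fin 6)))))

namespace evenSpan

theorem mem_iff {p : MvPolynomial (Fin 6) k} :
    p ∈ evenSpan k ↔ ∃ (c0 c15 : MvPolynomial (Fin 7) k)
      (c : Fin 6 → Fin 6 → MvPolynomial (Fin 7) k),
      p = theta k c0 * 1
        + (∑ i : Fin 6, ∑ j : Fin 6,
            if i < j ∧ ¬(i = 4 ∧ j = 5) then theta k (c i j) * (X i * X j) else 0)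
        + theta k c15 * (X 0 * X 1 * X 2 * X 3) := by
  have sum_quadratic_eq (c : Fin 6 × Fin 6 → MvPolynomial (Fin 7) k) :
      ∑ ij with ij.1 < ij.2 ∧ ¬(ij.1 = 4 ∧ ij.2 = 5), c ij • (X ij.1 * X ij.2) =
        ∑ i : Fin 6, ∑ j : Fin 6, if i < j ∧ ¬(i = 4 ∧ j = 5) then
          theta k (c (i, j)) * (X i * X j) else 0 := by
    rw [sum_filter, Fintype.sum_prod_type]
    rfl
  simp only [evenSpan, Submodule.mem_span_insert, Submodule.mem_span_image_finset_iff_exists_fun',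
    sum_quadratic_eq]
  simp only [smul_eq_theta_mul]
  constructor
  · rintro ⟨c0, _, ⟨c15, _, ⟨c, rfl⟩, rfl⟩, rfl⟩
    exact ⟨c0, c15, fun i j ↦ c (i, j), by ring⟩
  · rintro ⟨c0, c15, c, rfl⟩
    exact ⟨c0, _, ⟨c15, _, ⟨fun ij ↦ c ij.1 ij.2, rfl⟩, rfl⟩, by ring⟩

theorem one_mem : 1 ∈ evenSpan k :=
  Submodule.subset_span (Set.mem_insert _ _)

theorem X_zero_mul_X_one_mul_X_two_mul_X_three_mem : X 0 * X 1 * X 2 * X 3 ∈ evenSpan k :=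
  Submodule.subset_span (Set.mem_insert_of_mem _ (Set.mem_insert _ _))

theorem X_mul_X_mem_of_lt {i j : Fin 6} (hij : i < j) : X i * X j ∈ evenSpan k := by
  have generator_mem {i j : Fin 6} (h : i < j ∧ ¬(i = 4 ∧ j = 5)) : X i * X j ∈ evenSpan k :=
    Submodule.subset_span <| Set.mem_insert_of_mem _ <| Set.mem_insert_of_mem _
      ⟨(i, j), by simpa using h, rfl⟩
  by_cases h : i = 4 ∧ j = 5
  · obtain ⟨rfl, rfl⟩ := h
    have X_four_mul_X_five : (X 4 * X 5 : MvPolynomial (Fin 6) k) =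
        hyperbolicForm k * 1 - X 0 * X 1 - X 2 * X 3 := by
      rw [hyperbolicForm]
      ring
    rw [X_four_mul_X_five]
    exact sub_mem (sub_mem (hyperbolicForm_mul_mem one_mem) (generator_mem (by decide)))
      (generator_mem (by decide))
  · exact generator_mem ⟨hij, h⟩

theorem X_mul_X_mem (i j : Fin 6) : X i * X j ∈ evenSpan k := by
  obtain h | rfl | h := lt_trichotomy i j
  · exact X_mul_X_mem_of_lt h
  · simpa only [mul_one, sq] using X_sq_mul_mem i one_mem
  · rw [mul_comm]
    exact X_mul_X_mem_of_lt h

theorem prod_compl_mem_of_ne_partner {i j : Fin 6} (hij : i ≠ j) (hj : j ≠ partner i) :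
    ∏ l ∈ {i, j}ᶜ, X l ∈ evenSpan k := by
  have hmul := hyperbolicForm_mul_X_mul_X (k := k) (partner_involutive.injective.ne hij)
    (partner_involutive.injective.ne hj)
  rw [partner_involutive i, partner_involutive j] at hmul
  rw [← sub_eq_of_eq_add' hmul]
  exact sub_mem (hyperbolicForm_mul_mem (X_mul_X_mem _ _))
    (add_mem (X_sq_mul_mem _ (X_mul_X_mem _ _)) (X_sq_mul_mem _ (X_mul_X_mem _ _)))

theorem prod_compl_partner_mem (i : Fin 6) : ∏ l ∈ {i, partner i}ᶜ, X l ∈ evenSpan k := by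
  have h0123 := X_zero_mul_X_one_mul_X_two_mul_X_three_mem (k := k)
  have mem_of_add_eq {i j : Fin 6} {p : MvPolynomial (Fin 6) k}
      (h : p + X 0 * X 1 * X 2 * X 3 + X i ^ 2 * (X j ^ 2 * 1) =
        hyperbolicForm k * (X i * X j)) : p ∈ evenSpan k := by
    rw [eq_sub_of_add_eq (eq_sub_of_add_eq h)]
    exact sub_mem (sub_mem (hyperbolicForm_mul_mem (X_mul_X_mem i j))
      (X_sq_mul_mem i (X_sq_mul_mem j one_mem))) h0123
  have h0145 : X 0 * X 1 * X 4 * X 5 ∈ evenSpan k :=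
    mem_of_add_eq (i := 0) (j := 1) (by rw [hyperbolicForm]; ring)
  have h2345 : X 2 * X 3 * X 4 * X 5 ∈ evenSpan k :=
    mem_of_add_eq (i := 2) (j := 3) (by rw [hyperbolicForm]; ring)
  have compl_cases : ({i, partner i}ᶜ : Finset (Fin 6)) = {0, 1, 2, 3} ∨
      ({i, partner i}ᶜ : Finset (Fin 6)) = {0, 1, 4, 5} ∨
      ({i, partner i}ᶜ : Finset (Fin 6)) = {2, 3, 4, 5} := by
    decide +revert
  obtain h | h | h := compl_cases <;> rw [h]
  · simpa [mul_assoc] using h0123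
  · simpa [mul_assoc] using h0145
  · simpa [mul_assoc] using h2345

theorem prod_mem_of_card_eq_four {s : Finset (Fin 6)} (hs : #s = 4) :
    ∏ i ∈ s, X i ∈ evenSpan k := by
  have card_compl_eq_two : #sᶜ = 2 := by rw [card_compl, hs, Fintype.card_fin]
  obtain ⟨i, j, hij, h⟩ := card_eq_two.mp card_compl_eq_two
  rw [← compl_compl s, h]
  by_cases hj : j = partner i
  · rw [hj]
    exact prod_compl_partner_mem i
  · exact prod_compl_mem_of_ne_partner hij hj

theorem prod_univ_mem : ∏ i, X i ∈ evenSpan k := by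
  have prod_eq : (∏ i, X i : MvPolynomial (Fin 6) k) =
      hyperbolicForm k * (X 0 * X 1 * X 2 * X 3)
        - X 0 ^ 2 * (X 1 ^ 2 * (X 2 * X 3)) - X 2 ^ 2 * (X 3 ^ 2 * (X 0 * X 1)) := by
    rw [Fin.prod_univ_six, hyperbolicForm]
    ring
  rw [prod_eq]
  exact sub_mem (sub_mem (hyperbolicForm_mul_mem X_zero_mul_X_one_mul_X_two_mul_X_three_mem)
    (X_sq_mul_mem _ (X_sq_mul_mem _ (X_mul_X_mem _ _))))
    (X_sq_mul_mem _ (X_sq_mul_mem _ (X_mul_X_mem _ _)))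

theorem prod_mem_of_even_card {s : Finset (Fin 6)} (hs : Even #s) :
    ∏ i ∈ s, X i ∈ evenSpan k := by
  have card_le : #s ≤ 6 := card_finset_fin_le s
  obtain h | h | h | h : #s = 0 ∨ #s = 2 ∨ #s = 4 ∨ #s = 6 := by grind
  · rw [card_eq_zero.mp h, prod_empty]
    exact one_mem
  · obtain ⟨i, j, hij, rfl⟩ := card_eq_two.mp h
    rw [prod_pair hij]
    exact X_mul_X_mem i j
  · exact prod_mem_of_card_eq_four h
  · rw [(card_eq_iff_eq_univ s).mp h]
    exact prod_univ_mem

theorem mem_of_even_degree {p : MvPolynomial (Fin 6) k}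
    (hp : ∀ m ∈ p.support, Even (∑ i, m i)) : p ∈ evenSpan k := by
  rw [p.as_sum]
  exact sum_mem fun m hm ↦ monomial_mem_of_prod_odd_mem
    (prod_mem_of_even_card ((even_sum_iff_even_card_odd m).mp (hp m hm))) _

end evenSpan

end

theorem stmt_4_general {k : Type*} [CommRing k]
    (p : MvPolynomial (Fin 6) k)
    (hp : ∀ m ∈ p.support, Even (∑ i, m i)) :
    ∃ (c0 c15 : MvPolynomial (Fin 7) k)
      (c : Fin 6 → Fin 6 → MvPolynomial (Fin 7) k),
      p = theta k c0 * 1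
        + (∑ i : Fin 6, ∑ j : Fin 6,
            if i < j ∧ ¬(i = 4 ∧ j = 5) then theta k (c i j) * (X i * X j) else 0)
        + theta k c15 * (X 0 * X 1 * X 2 * X 3) :=
  evenSpan.mem_iff.mp (evenSpan.mem_of_even_degree hp)

theorem stmt_4 {k : Type*} [Field k] [CharP k 2]
    (p : MvPolynomial (Fin 6) k)
    -- `p` is a `k`-linear combination of monomials of even total degree
    (hp : ∀ m ∈ p.support, Even (∑ i, m i)) :
    -- `p` lies in the `k[z0,...,z6]`-submodule (via `θ`) generated by `1`,
    -- the 14 monomials `x_i*x_j` with `i < j`, `(i,j) ≠ (4,5)`, and `x0*x1*x2*x3`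
    ∃ (c0 c15 : MvPolynomial (Fin 7) k)
      (c : Fin 6 → Fin 6 → MvPolynomial (Fin 7) k),
      p = theta k c0 * 1
        + (∑ i : Fin 6, ∑ j : Fin 6,
            if i < j ∧ ¬(i = 4 ∧ j = 5) then theta k (c i j) * (X i * X j) else 0)
        + theta k c15 * (X 0 * X 1 * X 2 * X 3) :=
  stmt_4_general p hp
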